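/- Let τ ≥ 1 and n = 2^τ, and index nodes by binary vectors x ∈ (ℤ/2ℤ)^τ. For each l ∈ {0, …, τ−1} let e_l ∈ (ℤ/2ℤ)^τ be the vector with 1 in coordinate l and 0 elsewhere, and define the n×n matrix W^(l) by W^(l)_{x,y} = 1/2 if y = x, W^(l)_{x,y} = 1/2 if y = x + e_l, and W^(l)_{x,y} = 0 otherwise. Then each W^(l) is symmetric and doubly stochastic with exactly one nonzero off-diagonal entry per row (maximum degree 1), and W^(0) W^(1) ⋯ W^(τ−1) = J_n, the n×n matrix all of whose entries are 1/n. (This is the finite-time convergence of the 1-peer hypercube graph when the number of nodes is a power of 2.) -/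

import Mathlib

/-!
Left multiplication by `W^(l)` averages row `x` with row `x + e_l`. Hence, for distinct coordinates
`l₁, …, l_k`, the entry `(x, y)` of `W^(l₁) ⋯ W^(l_k)` is `2^(-k)` if `x` and `y` agree outside
`{l₁, …, l_k}`, and `0` otherwise (`hyperW_prod_apply`). The induction step works because exactly
one of `x` and `x + e_l` agrees with `y` at `l`, so at most one of the two averaged entries can be
nonzero. Taking all `τ` coordinates, the agreement condition is vacuous and every entry is `2^(-τ)`.
-/

/-- A square real matrix is doubly stochastic: nonnegative entries, each
row and each column sums to 1. -/
def DoublyStochastic {ι : Type*} [Fintype ι] (W : Matrix ι ι ℝ) : Prop :=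
  (∀ i j, 0 ≤ W i j) ∧ (∀ i, ∑ j, W i j = 1) ∧ (∀ j, ∑ i, W i j = 1)

/-- The gossip matrix `W^(l)`, averaging each node `x` of the hypercube with `x + e_l`. -/
noncomputable def hyperW {τ : ℕ} (l : Fin τ) : Matrix (Fin τ → ZMod 2) (Fin τ → ZMod 2) ℝ :=
  Matrix.of (fun x y : Fin τ → ZMod 2 =>
    if y = x then (1 : ℝ) / 2
    else if y = x + Pi.single l 1 then (1 : ℝ) / 2 else 0)

lemma eq_add_single_comm {τ : ℕ} (l : Fin τ) (x y : Fin τ → ZMod 2) :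
    y = x + Pi.single l 1 ↔ x = y + Pi.single l 1 := by
  have h2 : (Pi.single l 1 : Fin τ → ZMod 2) + Pi.single l 1 = 0 := by
    rw [← Pi.single_add, show (1 : ZMod 2) + 1 = 0 from by decide, Pi.single_zero]
  constructor <;> rintro rfl <;> rw [add_assoc, h2, add_zero]

/-- The two branches of the definition are disjoint, so the entry is a sum of two indicators. -/
lemma hyperW_apply {τ : ℕ} (l : Fin τ) (x y : Fin τ → ZMod 2) :
    hyperW l x y = (if y = x then (1 : ℝ) / 2 else 0) +
      (if y = x + Pi.single l 1 then (1 : ℝ) / 2 else 0) := by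
  simp only [hyperW, Matrix.of_apply]
  by_cases h : y = x
  · subst h
    simp
  · simp [h]

lemma hyperW_symm {τ : ℕ} (l : Fin τ) : (hyperW l).IsSymm := by
  ext x y
  rw [Matrix.transpose_apply, hyperW_apply, hyperW_apply]
  simp only [eq_add_single_comm l y x, eq_comm (a := x) (b := y)]

lemma hyperW_row_sum {τ : ℕ} (l : Fin τ) (x : Fin τ → ZMod 2) : ∑ y, hyperW l x y = 1 := by
  simp only [hyperW_apply, Finset.sum_add_distrib, Finset.sum_ite_eq', Finset.mem_univ, if_true]
  norm_num

lemma hyperW_doublyStochastic {τ : ℕ} (l : Fin τ) : DoublyStochastic (hyperW l) := by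
  refine ⟨fun x y => ?_, hyperW_row_sum l, fun y => ?_⟩
  · rw [hyperW_apply]
    positivity
  · rw [← hyperW_row_sum l y]
    exact Finset.sum_congr rfl fun x _ => (hyperW_symm l).apply y x

lemma hyperW_degree {τ : ℕ} (l : Fin τ) (x : Fin τ → ZMod 2) :
    ({y | y ≠ x ∧ hyperW l x y ≠ 0} : Set (Fin τ → ZMod 2)).ncard = 1 := by
  rw [Set.ncard_eq_one]
  refine ⟨x + Pi.single l 1, ?_⟩
  ext y
  simp only [Set.mem_ofPred_eq, Set.mem_singleton_iff, hyperW_apply]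
  constructor
  · rintro ⟨h, h'⟩
    by_contra h''
    simp [h, h''] at h'
  · rintro rfl
    simp

lemma hyperW_mul_apply {τ : ℕ} (l : Fin τ) (P : Matrix (Fin τ → ZMod 2) (Fin τ → ZMod 2) ℝ)
    (x y : Fin τ → ZMod 2) :
    (hyperW l * P) x y = 1 / 2 * P x y + 1 / 2 * P (x + Pi.single l 1) y := by
  simp only [Matrix.mul_apply, hyperW_apply, add_mul, Finset.sum_add_distrib, ite_mul, zero_mul,
    Finset.sum_ite_eq', Finset.mem_univ, if_true]

open Classical in
/-- A product over distinct coordinates is the uniform averaging over those coordinates. -/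
lemma hyperW_prod_apply {τ : ℕ} (L : List (Fin τ)) (hL : L.Nodup) (x y : Fin τ → ZMod 2) :
    (L.map hyperW).prod x y = if ∀ i, i ∉ L → x i = y i then ((1 : ℝ) / 2) ^ L.length else 0 := by
  induction L generalizing x with
  | nil => simp [Matrix.one_apply, funext_iff]
  | cons l L ih =>
    obtain ⟨hl, hL⟩ := List.nodup_cons.mp hL
    rw [List.map_cons, List.prod_cons, hyperW_mul_apply, ih hL, ih hL, List.length_cons, pow_succ']
    have off : ∀ i, i ≠ l → (x + Pi.single l 1 : Fin τ → ZMod 2) i = x i := by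
      intro i hi
      simp [hi]
    have at_l : (x + Pi.single l 1 : Fin τ → ZMod 2) l = x l + 1 := by simp
    have flip : ∀ a b : ZMod 2, a + 1 = b ↔ a ≠ b := by decide
    by_cases h : x l = y l
    · have h1 : ¬ ∀ i, i ∉ L → (x + Pi.single l 1 : Fin τ → ZMod 2) i = y i := by
        intro H
        have := H l hl
        rw [at_l, flip] at this
        exact this h
      have h2 : (∀ i, i ∉ L → x i = y i) ↔ ∀ i, i ∉ l :: L → x i = y i := by
        simp only [List.mem_cons, not_or]
        refine ⟨fun H i hi => H i hi.2, fun H i hi => ?_⟩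
        by_cases e : i = l
        · rw [e, h]
        · exact H i ⟨e, hi⟩
      rw [if_neg h1, mul_zero, add_zero, mul_ite, mul_zero]
      simp only [h2]
    · have h1 : ¬ ∀ i, i ∉ L → x i = y i := fun H => h (H l hl)
      have h2 : (∀ i, i ∉ L → (x + Pi.single l 1 : Fin τ → ZMod 2) i = y i) ↔
          ∀ i, i ∉ l :: L → x i = y i := by
        simp only [List.mem_cons, not_or]
        refine ⟨fun H i hi => (off i hi.1).symm.trans (H i hi.2), fun H i hi => ?_⟩
        by_cases e : i = l
        · rw [e, at_l, flip]
          exact h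
        · rw [off i e]
          exact H i ⟨e, hi⟩
      rw [if_neg h1, mul_zero, zero_add, mul_ite, mul_zero]
      simp only [h2]

/-- Finite-time convergence of the 1-peer hypercube graph on `n = 2^τ` nodes
indexed by binary vectors `(ℤ/2ℤ)^τ`: each `W^(l)` (averaging node `x` with
node `x + e_l`) is symmetric, doubly stochastic, has exactly one nonzero
off-diagonal entry per row, and the product `W^(0) ⋯ W^(τ−1)` equals `J_n`. -/
theorem one_peer_hypercube_finite_time_convergence (τ : ℕ) (hτ : 1 ≤ τ) :
    (∀ l : Fin τ,
      (Matrix.of (fun x y : Fin τ → ZMod 2 =>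
        if y = x then (1 : ℝ) / 2
        else if y = x + Pi.single l 1 then (1 : ℝ) / 2 else 0)).IsSymm ∧
      DoublyStochastic (Matrix.of (fun x y : Fin τ → ZMod 2 =>
        if y = x then (1 : ℝ) / 2
        else if y = x + Pi.single l 1 then (1 : ℝ) / 2 else 0)) ∧
      (∀ x : Fin τ → ZMod 2,
        ({y | y ≠ x ∧
            (Matrix.of (fun x y : Fin τ → ZMod 2 =>
              if y = x then (1 : ℝ) / 2
              else if y = x + Pi.single l 1 then (1 : ℝ) / 2 else 0)) x y ≠ 0}
          : Set (Fin τ → ZMod 2)).ncard = 1)) ∧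
    (List.ofFn (fun l : Fin τ =>
      Matrix.of (fun x y : Fin τ → ZMod 2 =>
        if y = x then (1 : ℝ) / 2
        else if y = x + Pi.single l 1 then (1 : ℝ) / 2 else 0))).prod =
      Matrix.of (fun _ _ : Fin τ → ZMod 2 => ((2 ^ τ : ℕ) : ℝ)⁻¹) := by
  refine ⟨fun l => ⟨hyperW_symm l, hyperW_doublyStochastic l, hyperW_degree l⟩, ?_⟩
  change (List.ofFn (fun l : Fin τ => hyperW l)).prod = _
  ext x y
  rw [List.ofFn_eq_map, hyperW_prod_apply _ (List.nodup_finRange τ)]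
  simp
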